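/- arXiv:2509.02658 — 5 statements merged into one kernel-verified Lean document; each statement's English description precedes it below -/
import Mathlib

section
/- Let S be a nonempty finite type, let D and h be natural numbers, and let G_j, Ω_j : S → ℝ for j = 1, …, D be given functions (the log-moduli and chosen single-valued phase branches of D target wave-functions Ψ_j(x) = exp(G_j(x) + i Ω_j(x)) on their common support). Let r_both be the dimension over ℝ of the subspace of the function space S → ℝ spanned by the constant function 1 together with all G_j and all Ω_j. Then the following are equivalent: (i) there exist a trunk f : S → ℝ^h, head vectors α_j, φ_j ∈ ℝ^h and scalars β_j, γ_j ∈ ℝ (j = 1, …, D) such that for every j and every x ∈ S one has α_j·f(x) + β_j = G_j(x) and φ_j·f(x) + γ_j = Ω_j(x) (so that exp((α_j·f(x) + β_j) + i(φ_j·f(x) + γ_j)) = Ψ_j(x) for all x ∈ S); (ii) r_both ≤ h + 1. In particular the minimal trunk width realising all D states exactly on S is h⋆_both = r_both − 1. -/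
/-- A subspace of dimension at most `h` lies in the span of `h` vectors. -/
theorem exists_spanning_family {V : Type*} [AddCommGroup V] [Module ℝ V] [Module.Finite ℝ V]
    (K : Submodule ℝ V) (h : ℕ) (hK : Module.finrank ℝ K ≤ h) :
    ∃ g : Fin h → V, K ≤ Submodule.span ℝ (Set.range g) := by
  let b := Module.finBasis ℝ K
  refine ⟨fun i => if hi : (i : ℕ) < Module.finrank ℝ K then (b ⟨i, hi⟩ : V) else 0, ?_⟩
  intro v hv
  have hsum := congrArg (Subtype.val) (b.sum_repr ⟨v, hv⟩)
  simp only [Submodule.coe_sum, Submodule.coe_smul] at hsum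
  rw [← hsum]
  refine Submodule.sum_mem _ fun i _ => Submodule.smul_mem _ _ (Submodule.subset_span ?_)
  exact ⟨⟨i, lt_of_lt_of_le i.2 hK⟩, by simp⟩

/-- **ST-MH representability and minimal width on the common support.**
Given `D` target log-moduli `G j : S → ℝ` and single-valued phase branches
`Ω j : S → ℝ` on a finite nonempty common support `S`, and letting `r_both` be
the dimension of the span of the constant function `1` together with all `G j`
and `Ω j`, a single trunk of latent width `h` with affine linear heads can
reproduce all the log-moduli and phases exactly on `S` iff `r_both ≤ h + 1`. -/
theorem stmh_representability_iff_rank_le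
    (S : Type*) [Fintype S] [Nonempty S]
    (D h : ℕ) (G Ω : Fin D → S → ℝ)
    (r_both : ℕ)
    (hr : r_both =
      Module.finrank ℝ
        (Submodule.span ℝ ({(1 : S → ℝ)} ∪ Set.range G ∪ Set.range Ω))) :
    (∃ (f : S → Fin h → ℝ) (α φ : Fin D → Fin h → ℝ) (β γ : Fin D → ℝ),
        ∀ (j : Fin D) (x : S),
          (∑ i, α j i * f x i) + β j = G j x ∧
          (∑ i, φ j i * f x i) + γ j = Ω j x)
      ↔ r_both ≤ h + 1 := by
  subst hr
  constructor
  · rintro ⟨f, α, φ, β, γ, H⟩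
    let g : Fin (h + 1) → S → ℝ := Fin.cons 1 (fun i x => f x i)
    have key : ∀ (a : Fin h → ℝ) (c : ℝ) (F : S → ℝ),
        (∀ x, (∑ i, a i * f x i) + c = F x) → F ∈ Submodule.span ℝ (Set.range g) := by
      intro a c F hF
      rw [Submodule.mem_span_range_iff_exists_fun]
      refine ⟨Fin.cons c a, ?_⟩
      funext x
      rw [Fin.sum_univ_succ]
      simp [g, ← hF x, add_comm]
    have hle : Submodule.span ℝ ({(1 : S → ℝ)} ∪ Set.range G ∪ Set.range Ω)
        ≤ Submodule.span ℝ (Set.range g) := by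
      rw [Submodule.span_le]
      rintro F ((hF | ⟨j, rfl⟩) | ⟨j, rfl⟩)
      · rw [Set.mem_singleton_iff] at hF
        subst hF
        exact Submodule.subset_span ⟨0, by simp [g]⟩
      · exact key (α j) (β j) _ fun x => (H j x).1
      · exact key (φ j) (γ j) _ fun x => (H j x).2
    refine (Submodule.finrank_mono hle).trans ?_
    have := finrank_range_le_card (R := ℝ) g
    simpa [Set.finrank] using this
  · intro hr
    obtain ⟨x0⟩ := ‹Nonempty S›
    set V := Submodule.span ℝ ({(1 : S → ℝ)} ∪ Set.range G ∪ Set.range Ω) with hV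
    have h1 : (1 : S → ℝ) ∈ V := Submodule.subset_span (by simp)
    have hG : ∀ j, G j ∈ V := fun j => Submodule.subset_span (by simp)
    have hΩ : ∀ j, Ω j ∈ V := fun j => Submodule.subset_span (by simp)
    let K : Submodule ℝ (S → ℝ) := V ⊓ LinearMap.ker (LinearMap.proj (R := ℝ) (φ := fun _ : S => ℝ) x0)
    have hlt : K < V := by
      refine lt_of_le_of_ne inf_le_left fun he => ?_
      have h2 : (1 : S → ℝ) ∈ K := he ▸ h1
      have h3 := h2.2
      simp at h3
    have hK : Module.finrank ℝ K ≤ h := by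
      have := Submodule.finrank_lt_finrank_of_lt hlt
      omega
    obtain ⟨g, hg⟩ := exists_spanning_family K h hK
    have key : ∀ F ∈ V, ∃ a : Fin h → ℝ, ∀ x, (∑ i, a i * g i x) + F x0 = F x := by
      intro F hF
      have hm : F - F x0 • (1 : S → ℝ) ∈ K :=
        ⟨V.sub_mem hF (V.smul_mem _ h1), by simp⟩
      obtain ⟨a, ha⟩ := (Submodule.mem_span_range_iff_exists_fun ℝ).1 (hg hm)
      refine ⟨a, fun x => ?_⟩
      have := congrFun ha x
      simp at this
      linarith
    choose α hα using fun j => key _ (hG j)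
    choose φ hφ using fun j => key _ (hΩ j)
    exact ⟨fun x i => g i x, α, φ, fun j => G j x0, fun j => Ω j x0,
      fun j x => ⟨hα j x, hφ j x⟩⟩
end

section
/- Let A be a unital associative algebra over ℝ, let N ≥ 3, J₁ ∈ ℝ, and for each site j ∈ ℤ/Nℤ let s_j = (s_j^1, s_j^2, s_j^3) be a triple of elements of A whose components at distinct sites commute. Define d(j,k) := Σ_{a=1}^3 s_j^a s_k^a and τ_j² := Σ_{a=1}^3 (s_j^a + s_{j+1}^a + s_{j+2}^a)². Assume the on-site Casimir condition d(j,j) = (3/4)·1 for every j. Then J₁ Σ_j d(j, j+1) + (J₁/2) Σ_j d(j, j+2) = (J₁/4) Σ_j τ_j² − (9 J₁ N / 16)·1. -/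
/-- **Majumdar–Ghosh representation of the `J₁–J₂` Hamiltonian at `J₂ = J₁/2`.**
In a unital associative `ℝ`-algebra with spin triples `s j` on a periodic ring
of `N ≥ 3` sites whose components at distinct sites commute, and with the
on-site Casimir condition `d(j,j) = (3/4)·1`, the Majumdar–Ghosh Hamiltonian
satisfies
`J₁ Σ_j d(j,j+1) + (J₁/2) Σ_j d(j,j+2) = (J₁/4) Σ_j τ_j² − (9J₁N/16)·1`. -/
theorem majumdar_ghosh_casimir_representation
    (A : Type*) [Ring A] [Algebra ℝ A]
    (N : ℕ) [NeZero N] (hN : 3 ≤ N) (J₁ : ℝ)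
    (s : ZMod N → Fin 3 → A)
    (hcomm : ∀ (j k : ZMod N), j ≠ k → ∀ (a b : Fin 3),
      s j a * s k b = s k b * s j a)
    (d : ZMod N → ZMod N → A)
    (hd : ∀ j k, d j k = ∑ a, s j a * s k a)
    (τsq : ZMod N → A)
    (hτ : ∀ j, τsq j = ∑ a, (s j a + s (j + 1) a + s (j + 2) a) ^ 2)
    (hcas : ∀ j, d j j = (3 / 4 : ℝ) • (1 : A)) :
    J₁ • (∑ j, d j (j + 1)) + (J₁ / 2) • (∑ j, d j (j + 2))
      = (J₁ / 4) • (∑ j, τsq j) - ((9 * J₁ * (N : ℝ)) / 16) • (1 : A) := by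
  have hsymm : ∀ j k, d j k = d k j := by
    intro j k
    by_cases h : j = k
    · rw [h]
    · rw [hd, hd]
      exact Finset.sum_congr rfl fun a _ => hcomm j k h a a
  have hτ' : ∀ j, τsq j = (9 / 4 : ℝ) • (1 : A) + (2 : ℝ) • d j (j + 1)
      + (2 : ℝ) • d (j + 1) (j + 1 + 1) + (2 : ℝ) • d j (j + 2) := by
    intro j
    have e : j + 1 + 1 = j + 2 := by ring
    have expand : τsq j = d j j + d (j + 1) (j + 1) + d (j + 2) (j + 2)
        + (d j (j + 1) + d (j + 1) j) + (d (j + 1) (j + 2) + d (j + 2) (j + 1))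
        + (d j (j + 2) + d (j + 2) j) := by
      rw [hτ]
      simp only [hd, ← Finset.sum_add_distrib]
      refine Finset.sum_congr rfl fun a _ => ?_
      noncomm_ring
    rw [expand, hsymm (j + 1) j, hsymm (j + 2) (j + 1), hsymm (j + 2) j, hcas, hcas, hcas, e]
    module
  have hshift : ∑ j, d (j + 1) (j + 1 + 1) = ∑ j, d j (j + 1) :=
    Equiv.sum_comp (Equiv.addRight (1 : ZMod N)) fun j => d j (j + 1)
  have hsum : ∑ j, τsq j = ((N : ℝ) * (9 / 4)) • (1 : A) + (4 : ℝ) • (∑ j, d j (j + 1))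
      + (2 : ℝ) • ∑ j, d j (j + 2) := by
    simp only [hτ', Finset.sum_add_distrib, ← Finset.smul_sum, hshift]
    rw [Finset.sum_const, Finset.card_univ, ZMod.card, ← Nat.cast_smul_eq_nsmul ℝ]
    module
  rw [hsum]
  module
end

section
/- Let N = 2M with M ≥ 1, and index configurations by s : ℤ/Nℤ → {↑, ↓}. Define the singlet-pair amplitude f(↑,↓) = 1/√2, f(↓,↑) = −1/√2, and f = 0 on equal pairs, and define the two dimer-covering wave-functions Φ_A(s) := Π_{m=0}^{M−1} f(s(2m), s(2m+1)) and Φ_B(s) := Π_{m=0}^{M−1} f(s(2m+1), s(2m+2)), indices modulo N. Then the overlap satisfies Σ_s Φ_B(s) Φ_A(s) = (−1)^M · 2^{1−M}, i.e. ⟨Φ_B|Φ_A⟩ = (−1)^{N/2} 2^{1−N/2}. -/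
/-- **Overlap of the two Majumdar–Ghosh dimer coverings.**
On a periodic ring of `N = 2M` sites, with configurations `s : ZMod N → Bool`
(`true = ↑`), singlet-pair amplitude `f` (`f ↑↓ = 1/√2`, `f ↓↑ = −1/√2`,
`f = 0` on equal pairs) and dimer-covering wave-functions
`Φ_A(s) = Π_m f(s(2m), s(2m+1))`, `Φ_B(s) = Π_m f(s(2m+1), s(2m+2))`,
the overlap is `⟨Φ_B|Φ_A⟩ = Σ_s Φ_B(s) Φ_A(s) = (−1)^M · 2^(1−M)`. -/
theorem majumdar_ghosh_dimer_overlap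
    (M : ℕ) (hM : 1 ≤ M) [NeZero (2 * M)]
    (f : Bool → Bool → ℝ)
    (hf_ud : f true false = 1 / Real.sqrt 2)
    (hf_du : f false true = -(1 / Real.sqrt 2))
    (hf_eq : ∀ a, f a a = 0)
    (ΦA ΦB : (ZMod (2 * M) → Bool) → ℝ)
    (hA : ∀ s, ΦA s = ∏ m : Fin M,
        f (s ((2 * (m : ℕ) : ℕ) : ZMod (2 * M)))
          (s ((2 * (m : ℕ) + 1 : ℕ) : ZMod (2 * M))))
    (hB : ∀ s, ΦB s = ∏ m : Fin M,
        f (s ((2 * (m : ℕ) + 1 : ℕ) : ZMod (2 * M)))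
          (s ((2 * (m : ℕ) + 2 : ℕ) : ZMod (2 * M)))) :
    ∑ s : ZMod (2 * M) → Bool, ΦB s * ΦA s
      = (-1 : ℝ) ^ M * (2 : ℝ) ^ ((1 : ℤ) - (M : ℤ)) := by
  have hne : ∀ a b, f a b ≠ 0 → b = !a := by
    intro a b h
    cases a <;> cases b <;> simp_all
  have hff : ∀ a, f (!a) a * f a (!a) = -1 / 2 := by
    have h2 : (Real.sqrt 2)⁻¹ * (Real.sqrt 2)⁻¹ = 1 / 2 := by
      rw [← mul_inv, Real.mul_self_sqrt (by norm_num)]; norm_num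
    intro a
    cases a <;> simp only [Bool.not_true, Bool.not_false, hf_ud, hf_du, one_div] <;> linarith
  let g : Bool → ZMod (2 * M) → Bool := fun b x => xor b (decide (x.val % 2 = 1))
  have hg : ∀ b (n : ℕ), g b (n : ZMod (2 * M)) = xor b (decide (n % 2 = 1)) := by
    intro b n
    simp only [g, ZMod.val_natCast]
    rw [Nat.mod_mod_of_dvd _ (Dvd.intro _ rfl)]
  have hginj : Function.Injective g := by
    intro a b h
    have h0 := congrFun h ((0 : ℕ) : ZMod (2 * M))
    rw [hg, hg] at h0
    simpa using h0
  have hval : ∀ b, ΦB (g b) * ΦA (g b) = (-1 / 2) ^ M := by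
    intro b
    rw [hA, hB, ← Finset.prod_mul_distrib]
    have : ∀ m : Fin M, f (g b ((2 * (m : ℕ) + 1 : ℕ) : ZMod (2 * M)))
          (g b ((2 * (m : ℕ) + 2 : ℕ) : ZMod (2 * M))) *
        f (g b ((2 * (m : ℕ) : ℕ) : ZMod (2 * M)))
          (g b ((2 * (m : ℕ) + 1 : ℕ) : ZMod (2 * M))) = -1 / 2 := by
      intro m
      rw [hg, hg, hg, show (2 * (m : ℕ) + 1) % 2 = 1 by omega,
        show (2 * (m : ℕ) + 2) % 2 = 0 by omega, show (2 * (m : ℕ)) % 2 = 0 by omega]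
      simpa using hff b
    rw [Finset.prod_congr rfl (fun m _ => this m)]
    rw [Finset.prod_const, Finset.card_univ, Fintype.card_fin]
  have hsupp : ∀ s, ΦB s * ΦA s ≠ 0 → s = g (s ((0 : ℕ) : ZMod (2 * M))) := by
    intro s hs
    have h1 := left_ne_zero_of_mul hs
    have h2 := right_ne_zero_of_mul hs
    rw [hB, Finset.prod_ne_zero_iff] at h1
    rw [hA, Finset.prod_ne_zero_iff] at h2
    have key : ∀ n : ℕ, n < 2 * M →
        s ((n : ℕ) : ZMod (2 * M)) = g (s ((0 : ℕ) : ZMod (2 * M))) (n : ZMod (2 * M)) := by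
      intro n
      induction n with
      | zero => intro _; rw [hg]; simp
      | succ n ih =>
        intro hn
        have ih' := ih (by omega)
        have hstep : s ((n + 1 : ℕ) : ZMod (2 * M)) = !(s ((n : ℕ) : ZMod (2 * M))) := by
          rcases Nat.even_or_odd' n with ⟨k, rfl | rfl⟩
          · exact hne _ _ (h2 ⟨k, by omega⟩ (Finset.mem_univ _))
          · exact hne _ _ (h1 ⟨k, by omega⟩ (Finset.mem_univ _))
        rw [hstep, ih', hg, hg]
        rcases Nat.mod_two_eq_zero_or_one n with h | h
        · rw [h, show (n + 1) % 2 = 1 by omega]; simp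
        · rw [h, show (n + 1) % 2 = 0 by omega]; simp
    funext x
    have := key x.val (ZMod.val_lt x)
    rwa [ZMod.natCast_zmod_val] at this
  have hsum : ∑ s : ZMod (2 * M) → Bool, ΦB s * ΦA s = ∑ b : Bool, ΦB (g b) * ΦA (g b) := by
    symm
    rw [← Finset.sum_image (s := Finset.univ) (g := g) (f := fun s => ΦB s * ΦA s)
      (fun a _ b _ h => hginj h)]
    apply Finset.sum_subset (Finset.subset_univ _)
    intro s _ hs
    by_contra h
    exact hs (Finset.mem_image.mpr ⟨_, Finset.mem_univ _, (hsupp s h).symm⟩)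
  rw [hsum]
  simp only [hval, Fintype.sum_bool]
  rw [zpow_sub₀ (by norm_num), zpow_one, zpow_natCast, div_pow]
  ring
end

section
/- Let C be a nonempty finite type, t₀ ∈ ℝ, and ψ : ℝ → C → ℂ such that for each x ∈ C the function t ↦ ψ(t, x) has complex derivative ψ'(x) at t₀ and ψ(t₀, x) ≠ 0. Define the log-derivative O(x) := ψ'(x)/ψ(t₀, x), the Born probability p(t, x) := |ψ(t, x)|² / Σ_{y∈C} |ψ(t, y)|², and ⟨O⟩ := Σ_{y∈C} p(t₀, y) O(y). Then for each x ∈ C, the function t ↦ p(t, x) has derivative at t₀ equal to 2 Re[ O(x) − ⟨O⟩ ] · p(t₀, x). -/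
/-- **Derivative of the Born probability in VMC.**
For a parametrised trial wave-function `ψ` on a nonempty finite configuration
set, nonvanishing at the current parameter `t₀`, with log-derivative
`O(x) = ψ'(x)/ψ(t₀,x)` and Born probability
`p(t,x) = |ψ(t,x)|² / Σ_y |ψ(t,y)|²`, the derivative of `t ↦ p(t,x)` at `t₀`
equals `2 Re[O(x) − ⟨O⟩] · p(t₀,x)`. -/
theorem born_probability_hasDerivAt
    (C : Type*) [Fintype C] [Nonempty C]
    (t₀ : ℝ) (ψ : ℝ → C → ℂ) (ψ' : C → ℂ)
    (hderiv : ∀ x, HasDerivAt (fun t => ψ t x) (ψ' x) t₀)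
    (hnz : ∀ x, ψ t₀ x ≠ 0)
    (O : C → ℂ) (hO : ∀ x, O x = ψ' x / ψ t₀ x)
    (p : ℝ → C → ℝ)
    (hp : ∀ t x, p t x = ‖ψ t x‖ ^ 2 / ∑ y, ‖ψ t y‖ ^ 2)
    (Oavg : ℂ) (hOavg : Oavg = ∑ y, (p t₀ y : ℂ) * O y) :
    ∀ x, HasDerivAt (fun t => p t x) (2 * (O x - Oavg).re * p t₀ x) t₀ := by
  have h1 : ∀ x, HasDerivAt (fun t => ‖ψ t x‖ ^ 2) (2 * (O x).re * ‖ψ t₀ x‖ ^ 2) t₀ := by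
    intro x
    have h := (hderiv x).norm_sq
    convert h using 1
    have e : ψ' x = O x * ψ t₀ x := by rw [hO, div_mul_cancel₀ _ (hnz x)]
    rw [e, Complex.inner, ← Complex.normSq_eq_norm_sq, Complex.normSq_apply]
    simp only [Complex.mul_re, Complex.mul_im, Complex.conj_re, Complex.conj_im]
    ring
  have hS : (∑ y, ‖ψ t₀ y‖ ^ 2) ≠ 0 := by
    apply ne_of_gt
    apply Finset.sum_pos
    · intro y _
      have := norm_pos_iff.mpr (hnz y)
      positivity
    · exact Finset.univ_nonempty
  have h2 : HasDerivAt (fun t => ∑ y, ‖ψ t y‖ ^ 2)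
      (∑ y, 2 * (O y).re * ‖ψ t₀ y‖ ^ 2) t₀ :=
    HasDerivAt.fun_sum (fun y _ => h1 y)
  have h3 : Oavg.re * (∑ y, ‖ψ t₀ y‖ ^ 2) * 2 = ∑ y, 2 * (O y).re * ‖ψ t₀ y‖ ^ 2 := by
    rw [hOavg, Complex.re_sum, mul_assoc, Finset.sum_mul]
    refine Finset.sum_congr rfl (fun y _ => ?_)
    rw [Complex.re_ofReal_mul, hp]
    field_simp
  intro x
  have h := (h1 x).fun_div h2 hS
  rw [← h3] at h
  simp only [hp]
  refine h.congr_deriv ?_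
  rw [Complex.sub_re]
  field_simp
end

section
/- Let C be a nonempty finite type, t₀ ∈ ℝ, and H : C → C → ℂ Hermitian, i.e. H(y,x) = conj(H(x,y)) for all x, y. Let ψ : ℝ → C → ℂ be such that for each x the function t ↦ ψ(t, x) has complex derivative ψ'(x) at t₀ and ψ(t₀, x) ≠ 0. Define O(x) := ψ'(x)/ψ(t₀,x), p(x) := |ψ(t₀,x)|²/Σ_y |ψ(t₀,y)|², ⟨O⟩ := Σ_x p(x) O(x), E_loc(x) := Σ_y H(x,y) ψ(t₀,y)/ψ(t₀,x), and the Rayleigh quotient E(t) := (Σ_x conj(ψ(t,x)) Σ_y H(x,y) ψ(t,y)) / (Σ_x |ψ(t,x)|²). Then E(t₀) is real, and t ↦ E(t) has derivative at t₀ equal to 2 Re[ Σ_x p(x) · conj(O(x) − ⟨O⟩) · (E_loc(x) − E(t₀)) ]. -/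
theorem herm_form_conj {C : Type*} [Fintype C] (H : C → C → ℂ)
    (hH : ∀ x y, H y x = starRingEnd ℂ (H x y)) (a b : C → ℂ) :
    starRingEnd ℂ (∑ x, starRingEnd ℂ (a x) * ∑ y, H x y * b y)
      = ∑ x, starRingEnd ℂ (b x) * ∑ y, H x y * a y := by
  simp only [map_sum, map_mul, Complex.conj_conj, Finset.mul_sum]
  rw [Finset.sum_comm]
  refine Finset.sum_congr rfl fun x _ => Finset.sum_congr rfl fun y _ => ?_
  rw [hH y x]
  ring

/-- **Gradient of the VMC energy (Rayleigh quotient).**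
For a Hermitian `H` on a nonempty finite configuration set and a parametrised
nonvanishing trial wave-function `ψ`, with Born probability `p`, log-derivative
`O`, its average `⟨O⟩`, local estimator `E_loc` and Rayleigh quotient
`E(t) = ⟨ψ_t, Hψ_t⟩/⟨ψ_t, ψ_t⟩`, the energy `E(t₀)` is real and
`E'(t₀) = 2 Re[Σ_x p(x) · conj(O(x) − ⟨O⟩) · (E_loc(x) − E(t₀))]`. -/
theorem rayleigh_quotient_hasDerivAt
    (C : Type*) [Fintype C] [Nonempty C]
    (t₀ : ℝ) (H : C → C → ℂ)
    (hH : ∀ x y, H y x = starRingEnd ℂ (H x y))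
    (ψ : ℝ → C → ℂ) (ψ' : C → ℂ)
    (hderiv : ∀ x, HasDerivAt (fun t => ψ t x) (ψ' x) t₀)
    (hnz : ∀ x, ψ t₀ x ≠ 0)
    (O : C → ℂ) (hO : ∀ x, O x = ψ' x / ψ t₀ x)
    (p : C → ℝ)
    (hp : ∀ x, p x = ‖ψ t₀ x‖ ^ 2 / ∑ y, ‖ψ t₀ y‖ ^ 2)
    (Oavg : ℂ) (hOavg : Oavg = ∑ x, (p x : ℂ) * O x)
    (Eloc : C → ℂ)
    (hEloc : ∀ x, Eloc x = ∑ y, H x y * ψ t₀ y / ψ t₀ x)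
    (E : ℝ → ℂ)
    (hE : ∀ t, E t
        = (∑ x, starRingEnd ℂ (ψ t x) * ∑ y, H x y * ψ t y)
            / ∑ x, ((‖ψ t x‖ : ℝ) : ℂ) ^ 2) :
    (E t₀).im = 0
      ∧ HasDerivAt E
          (((2 * (∑ x, (p x : ℂ) * (starRingEnd ℂ (O x - Oavg))
              * (Eloc x - E t₀)).re : ℝ) : ℂ)) t₀ := by
  have hsq : ∀ z : ℂ, ((‖z‖ : ℝ) : ℂ) ^ 2 = starRingEnd ℂ z * z := fun z => by
    rw [Complex.conj_mul']
  have hE' : ∀ t, E t = (∑ x, starRingEnd ℂ (ψ t x) * ∑ y, H x y * ψ t y)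
      / ∑ x, starRingEnd ℂ (ψ t x) * ψ t x := by
    intro t
    rw [hE t]
    simp only [hsq]
  obtain ⟨D, hD⟩ : ∃ D, D = ∑ x, starRingEnd ℂ (ψ t₀ x) * ψ t₀ x := ⟨_, rfl⟩
  obtain ⟨N, hN⟩ : ∃ N, N = ∑ x, starRingEnd ℂ (ψ t₀ x) * ∑ y, H x y * ψ t₀ y := ⟨_, rfl⟩
  obtain ⟨A, hA⟩ : ∃ A, A = ∑ x, starRingEnd ℂ (ψ' x) * ∑ y, H x y * ψ t₀ y := ⟨_, rfl⟩
  obtain ⟨B, hB⟩ : ∃ B, B = ∑ x, starRingEnd ℂ (ψ' x) * ψ t₀ x := ⟨_, rfl⟩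
  have hDr : D = ((∑ y, ‖ψ t₀ y‖ ^ 2 : ℝ) : ℂ) := by
    rw [hD]; push_cast; simp only [hsq]
  have hpos : 0 < ∑ y, ‖ψ t₀ y‖ ^ 2 :=
    Finset.sum_pos (fun x _ => by have := norm_pos_iff.2 (hnz x); positivity)
      Finset.univ_nonempty
  have hD0 : D ≠ 0 := by
    rw [hDr]; exact_mod_cast hpos.ne'
  have cD : starRingEnd ℂ D = D := by rw [hDr, Complex.conj_ofReal]
  have cN : starRingEnd ℂ N = N := by rw [hN, herm_form_conj H hH]
  have cA : starRingEnd ℂ A = ∑ x, starRingEnd ℂ (ψ t₀ x) * ∑ y, H x y * ψ' y := by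
    rw [hA, herm_form_conj H hH]
  have cB : starRingEnd ℂ B = ∑ x, starRingEnd ℂ (ψ t₀ x) * ψ' x := by
    rw [hB, map_sum]
    refine Finset.sum_congr rfl fun x _ => ?_
    rw [map_mul, Complex.conj_conj]; ring
  have hE0 : E t₀ = N / D := by rw [hE' t₀, ← hN, ← hD]
  have cE : starRingEnd ℂ (E t₀) = E t₀ := by rw [hE0, map_div₀, cN, cD]
  refine ⟨Complex.conj_eq_iff_im.1 cE, ?_⟩
  have hpD : ∀ x, (p x : ℂ) = starRingEnd ℂ (ψ t₀ x) * ψ t₀ x / D := by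
    intro x
    rw [hp x, Complex.ofReal_div, ← hDr, Complex.ofReal_pow, hsq]
  have hEl : ∀ x, Eloc x = (∑ y, H x y * ψ t₀ y) / ψ t₀ x := by
    intro x
    rw [hEloc x, Finset.sum_div]
  have h1 : ∑ x, (p x : ℂ) = 1 := by
    simp only [hpD]
    rw [← Finset.sum_div, ← hD, div_self hD0]
  have h2 : ∑ x, (p x : ℂ) * Eloc x = E t₀ := by
    rw [hE0, hN, Finset.sum_div]
    refine Finset.sum_congr rfl fun x _ => ?_
    have := hnz x
    rw [hpD, hEl]
    field_simp
  have h3 : ∑ x, (p x : ℂ) * starRingEnd ℂ (O x) = B / D := by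
    rw [hB, Finset.sum_div]
    refine Finset.sum_congr rfl fun x _ => ?_
    have h' : starRingEnd ℂ (ψ t₀ x) ≠ 0 := (map_ne_zero _).2 (hnz x)
    rw [hpD, hO, map_div₀]
    field_simp
  have h4 : ∑ x, (p x : ℂ) * starRingEnd ℂ (O x) * Eloc x = A / D := by
    rw [hA, Finset.sum_div]
    refine Finset.sum_congr rfl fun x _ => ?_
    have := hnz x
    have h' : starRingEnd ℂ (ψ t₀ x) ≠ 0 := (map_ne_zero _).2 (hnz x)
    rw [hpD, hO, hEl, map_div₀]
    field_simp
  have hS : ∑ x, (p x : ℂ) * (starRingEnd ℂ (O x - Oavg)) * (Eloc x - E t₀)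
      = A / D - E t₀ * (B / D) := by
    have : ∀ x, (p x : ℂ) * (starRingEnd ℂ (O x - Oavg)) * (Eloc x - E t₀)
        = (p x : ℂ) * starRingEnd ℂ (O x) * Eloc x
          - E t₀ * ((p x : ℂ) * starRingEnd ℂ (O x))
          - starRingEnd ℂ Oavg * ((p x : ℂ) * Eloc x)
          + starRingEnd ℂ Oavg * E t₀ * (p x : ℂ) := by
      intro x
      rw [map_sub]; ring
    simp only [this, Finset.sum_add_distrib, Finset.sum_sub_distrib, ← Finset.mul_sum]
    rw [h1, h2, h3, h4]; ring
  have hc : ∀ x, HasDerivAt (fun t => starRingEnd ℂ (ψ t x)) (starRingEnd ℂ (ψ' x)) t₀ :=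
    fun x => (hderiv x).star
  have dN : HasDerivAt (fun t => ∑ x, starRingEnd ℂ (ψ t x) * ∑ y, H x y * ψ t y)
      (A + starRingEnd ℂ A) t₀ := by
    rw [cA, hA, ← Finset.sum_add_distrib]
    exact HasDerivAt.fun_sum fun x _ => (hc x).fun_mul
      (HasDerivAt.fun_sum fun y _ => (hderiv y).const_mul (H x y))
  have dD : HasDerivAt (fun t => ∑ x, starRingEnd ℂ (ψ t x) * ψ t x)
      (B + starRingEnd ℂ B) t₀ := by
    rw [cB, hB, ← Finset.sum_add_distrib]
    exact HasDerivAt.fun_sum fun x _ => (hc x).fun_mul (hderiv x)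
  have dE := dN.fun_div dD (by rw [← hD]; exact hD0)
  rw [← hD, ← hN] at dE
  rw [← funext hE'] at dE
  rw [hS, ← Complex.add_conj]
  have hfin : A / D - E t₀ * (B / D) + starRingEnd ℂ (A / D - E t₀ * (B / D))
      = ((A + starRingEnd ℂ A) * D - N * (B + starRingEnd ℂ B)) / D ^ 2 := by
    rw [map_sub, map_mul, map_div₀, map_div₀, cE, cD, hE0]
    field_simp
    ring
  rw [hfin]
  exact dE
end
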